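/- For any finite simple graph G of order n with minimum degree δ ≥ max{k, l−1}, writing δ̂ = δ − max{k,l} + 1, the parametric domination number satisfies γ_{k,l}(G) ≤ ((ln(δ̂ + 1) + ln(b_{k−1} + b_{l−2}) + 1)/(δ̂ + 1)) · n, where b_t = C(δ, t) and b_{−1} = 0. -/

import Mathlib

open Finset Real

/-- The parametric domination number γ_{k,l}: the minimum cardinality of a set D such that
every vertex outside D has at least k members of D in its closed neighbourhood, and every
vertex of D has at least l members of D in its closed neighbourhood. -/
noncomputable def paramDomNum {V : Type*} [Fintype V] [DecidableEq V]
    (G : SimpleGraph V) [DecidableRel G.Adj] (k l : ℕ) : ℕ :=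
  sInf {m : ℕ | ∃ D : Finset V,
    (∀ v, v ∉ D → k ≤ ((insert v (G.neighborFinset v)) ∩ D).card) ∧
    (∀ v, v ∈ D → l ≤ ((insert v (G.neighborFinset v)) ∩ D).card) ∧
    m = D.card}

/-!
Put every vertex into a random set `A` independently with probability `p`. Fix `δ` neighbours of
each vertex, of which `u` miss `A`. To have `r` of the `δ` neighbours in the final set, at most
`u - (δ - r) ≤ C(u, δ - r + 1)` further vertices have to be added, and the binomial coefficient
counts the `(δ - r + 1)`-sets of neighbours that miss `A`, so its mean is
`C(δ, δ - r + 1) (1 - p) ^ (δ - r + 1)`. A vertex of `A` is asked for `l - 1` neighbours and a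
vertex outside `A` for `max k (l - 1)`, because the repair may put it into the set. The event
`v ∉ A` contributes one more factor `1 - p` to the `k`-term, so the repaired set has mean size at
most `(p + b (1 - p) ^ d) n` with `d = δ + 2 - max k l`, and `p = min 1 (log (d b) / d)` makes this
at most `(log (d b) + 1) / d * n`.
-/

section BernoulliWeight

variable {α R : Type*} [Fintype α] [DecidableEq α] [CommRing R]

/-- The probability that the random subset of `α` containing each element independently with
probability `p` equals `A`. It is a polynomial in `p`, so `p` is allowed in any commutative ring;
expectations are written as sums over all `A : Finset α`. -/
def bernoulliWeight (p : R) (A : Finset α) : R :=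
  p ^ #A * (1 - p) ^ #Aᶜ

lemma sum_bernoulliWeight_disjoint (p : R) (T : Finset α) :
    ∑ A with Disjoint T A, bernoulliWeight p A = (1 - p) ^ #T := by
  have filter_eq : ({A | Disjoint T A} : Finset (Finset α)) = Tᶜ.powerset := by
    ext A
    simp [subset_compl_comm, subset_compl_iff_disjoint_right]
  have weight_eq : ∀ A ∈ Tᶜ.powerset, bernoulliWeight p A =
      p ^ #A * (1 - p) ^ (#Tᶜ - #A) * (1 - p) ^ #T := by
    intro A hA
    have := card_le_card (mem_powerset.1 hA)
    have := card_add_card_compl A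
    have := card_add_card_compl T
    rw [bernoulliWeight, mul_assoc, ← pow_add]
    congr 2
    omega
  rw [filter_eq, sum_congr rfl weight_eq, ← sum_mul, sum_pow_mul_eq_add_pow, add_sub_cancel,
    one_pow, one_mul]

lemma sum_bernoulliWeight (p : R) : ∑ A : Finset α, bernoulliWeight p A = 1 := by
  simpa using sum_bernoulliWeight_disjoint p (∅ : Finset α)

lemma sum_bernoulliWeight_mem (p : R) (a : α) : ∑ A with a ∈ A, bernoulliWeight p A = p := by
  have total := sum_filter_add_sum_filter_not univ (a ∈ ·) (bernoulliWeight p)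
  have avoid := sum_bernoulliWeight_disjoint p {a}
  simp only [disjoint_singleton_left, card_singleton, pow_one] at avoid
  rw [avoid, sum_bernoulliWeight] at total
  linear_combination total

lemma sum_bernoulliWeight_mul_card (p : R) :
    ∑ A : Finset α, bernoulliWeight p A * #A = p * Fintype.card α := by
  calc ∑ A : Finset α, bernoulliWeight p A * #A
      = ∑ A : Finset α, ∑ _a ∈ A, bernoulliWeight p A := by
        simp only [sum_const, nsmul_eq_mul, mul_comm]
    _ = ∑ a, ∑ A with a ∈ A, bernoulliWeight p A := sum_comm' (by simp)
    _ = p * Fintype.card α := by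
        simp only [sum_bernoulliWeight_mem, sum_const, card_univ, nsmul_eq_mul, mul_comm]

lemma sum_bernoulliWeight_mul_choose_card_sdiff (p : R) {S U : Finset α} (hSU : Disjoint S U)
    (t : ℕ) :
    ∑ A with Disjoint U A, bernoulliWeight p A * (#(S \ A)).choose t =
      (#S).choose t * (1 - p) ^ (t + #U) := by
  calc ∑ A with Disjoint U A, bernoulliWeight p A * (#(S \ A)).choose t
      = ∑ A with Disjoint U A, ∑ _T ∈ powersetCard t (S \ A), bernoulliWeight p A := by
        simp only [sum_const, card_powersetCard, nsmul_eq_mul, mul_comm]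
    _ = ∑ T ∈ powersetCard t S, ∑ A with Disjoint (T ∪ U) A, bernoulliWeight p A := by
        refine sum_comm' fun A T => ?_
        simp only [mem_filter_univ, mem_powersetCard, subset_sdiff, disjoint_union_left]
        tauto
    _ = ∑ T ∈ powersetCard t S, (1 - p) ^ (t + #U) := by
        refine sum_congr rfl fun T hT => ?_
        obtain ⟨hTS, hTt⟩ := mem_powersetCard.1 hT
        rw [sum_bernoulliWeight_disjoint, card_union_of_disjoint (hSU.mono_left hTS), hTt]
    _ = (#S).choose t * (1 - p) ^ (t + #U) := by
        rw [sum_const, card_powersetCard, nsmul_eq_mul]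

lemma exists_le_sum_bernoulliWeight_mul [LinearOrder R] [IsStrictOrderedRing R] {p : R}
    (hp₀ : 0 ≤ p) (hp₁ : p ≤ 1) (F : Finset α → R) :
    ∃ A, F A ≤ ∑ B, bernoulliWeight p B * F B := by
  obtain ⟨A, hA⟩ := Finite.exists_min F
  refine ⟨A, ?_⟩
  calc F A = ∑ B : Finset α, bernoulliWeight p B * F A := by
        rw [← sum_mul, sum_bernoulliWeight, one_mul]
    _ ≤ ∑ B, bernoulliWeight p B * F B := by
        gcongr with B
        · exact mul_nonneg (pow_nonneg hp₀ _) (pow_nonneg (sub_nonneg.2 hp₁) _)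
        · exact hA B

end BernoulliWeight

section Repair

variable {α : Type*} [DecidableEq α]

lemma sub_le_choose_succ (u a : ℕ) : u - a ≤ u.choose (a + 1) := by
  induction u with
  | zero => simp
  | succ u ih =>
    rw [Nat.choose_succ_succ']
    obtain hau | hua := le_or_gt a u
    · have := Nat.choose_pos hau
      omega
    · omega

lemma sub_card_inter_le_choose {S : Finset α} {r : ℕ} (hr : r ≤ #S) (A : Finset α) :
    r - #(S ∩ A) ≤ (#(S \ A)).choose (#S - r + 1) := by
  have := card_sdiff_add_card_inter S A
  have := sub_le_choose_succ #(S \ A) (#S - r)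
  omega

lemma exists_superset_forall_le_card_inter {ι : Type*} [Fintype ι] {N : ι → Finset α}
    {r : ι → ℕ} (hr : ∀ i, r i ≤ #(N i)) (A : Finset α) :
    ∃ D, A ⊆ D ∧ (∀ i, r i ≤ #(N i ∩ D)) ∧ #D ≤ #A + ∑ i, (r i - #(N i ∩ A)) := by
  have exists_fill : ∀ i, ∃ S ⊆ N i \ A, #S = r i - #(N i ∩ A) := fun i => by
    apply exists_subset_card_eq
    have := card_sdiff_add_card_inter (N i) A
    have := hr i
    omega
  choose S hSN hScard using exists_fill
  refine ⟨A ∪ univ.biUnion S, subset_union_left, fun i => ?_, ?_⟩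
  · have disj : Disjoint (N i ∩ A) (S i) :=
      (disjoint_sdiff.mono_right (hSN i)).mono_left inter_subset_right
    have sub : N i ∩ A ∪ S i ⊆ N i ∩ (A ∪ univ.biUnion S) := by
      rw [inter_union_distrib_left]
      exact union_subset_union_right
        (subset_inter ((hSN i).trans sdiff_subset) (subset_biUnion_of_mem S (mem_univ i)))
    have := card_le_card sub
    rw [card_union_of_disjoint disj, hScard] at this
    omega
  · calc #(A ∪ univ.biUnion S) ≤ #A + #(univ.biUnion S) := card_union_le _ _
      _ ≤ #A + ∑ i, #(S i) := by gcongr; exact card_biUnion_le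
      _ = #A + ∑ i, (r i - #(N i ∩ A)) := by simp only [hScard]

variable [Fintype α]

/-- An upper bound for the size of a superset of `A` in which the vertices have enough
out-neighbours; `N v` is the set of out-neighbours of `v`. For out-degree `δ`, the indices
`i = δ - r + 1` and `j = δ - s + 1` correspond to `r` out-neighbours being required of the vertices
outside the superset and `s` of those inside. -/
def repairBound (N : α → Finset α) (i j : ℕ) (A : Finset α) : ℕ :=
  #A + ∑ v ∈ Aᶜ, (#(N v \ A)).choose i + ∑ v, (#(N v \ A)).choose j

lemma exists_card_le_repairBound {N : α → Finset α} {δ r s : ℕ} (hN : ∀ v, #(N v) = δ)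
    (hr : r ≤ δ) (hs : s ≤ δ) (A : Finset α) :
    ∃ D, (∀ v ∉ D, r ≤ #(N v ∩ D)) ∧ (∀ v ∈ D, s ≤ #(N v ∩ D)) ∧
      #D ≤ repairBound N (δ - r + 1) (δ - s + 1) A := by
  obtain ⟨D, hAD, hD, hcard⟩ := exists_superset_forall_le_card_inter (N := N)
    (r := fun v => if v ∈ A then s else max r s) (fun v => by grind) A
  refine ⟨D, fun v hv => ?_, fun v _ => ?_, hcard.trans ?_⟩
  · have := hD v
    rw [if_neg fun hvA => hv (hAD hvA)] at this
    exact (le_max_left r s).trans this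
  · refine le_trans ?_ (hD v)
    split_ifs
    exacts [le_rfl, le_max_right r s]
  · rw [repairBound, add_assoc, ← univ_inter Aᶜ, ← sum_ite_mem, ← sum_add_distrib]
    gcongr with v
    have deficit_r := sub_card_inter_le_choose (hr.trans_eq (hN v).symm) A
    have deficit_s := sub_card_inter_le_choose (hs.trans_eq (hN v).symm) A
    rw [hN v] at deficit_r deficit_s
    simp only [mem_compl]
    split_ifs <;> omega

lemma sum_bernoulliWeight_mul_repairBound {R : Type*} [CommRing R] (p : R) {N : α → Finset α}
    {δ : ℕ} (hN : ∀ v, #(N v) = δ) (hv : ∀ v, v ∉ N v) (i j : ℕ) :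
    ∑ A, bernoulliWeight p A * repairBound N i j A =
      (p + δ.choose i * (1 - p) ^ (i + 1) + δ.choose j * (1 - p) ^ j) * Fintype.card α := by
  have outside : ∑ A, bernoulliWeight p A * ∑ v ∈ Aᶜ, ((#(N v \ A)).choose i : R) =
      δ.choose i * (1 - p) ^ (i + 1) * Fintype.card α := by
    have mean (v : α) := sum_bernoulliWeight_mul_choose_card_sdiff p
      (disjoint_singleton_right.2 (hv v)) i
    simp only [mul_sum]
    rw [sum_comm' (s' := fun v => {A | Disjoint {v} A}) (t' := univ) (by simp)]
    simp only [mean, hN, card_singleton, sum_const, card_univ, nsmul_eq_mul, mul_comm]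
  have everywhere : ∑ A, bernoulliWeight p A * ∑ v, ((#(N v \ A)).choose j : R) =
      δ.choose j * (1 - p) ^ j * Fintype.card α := by
    have mean (v : α) := sum_bernoulliWeight_mul_choose_card_sdiff p
      (disjoint_empty_right (N v)) j
    simp only [disjoint_empty_left, filter_true, card_empty, add_zero] at mean
    simp only [mul_sum]
    rw [sum_comm]
    simp only [mean, hN, sum_const, card_univ, nsmul_eq_mul, mul_comm]
  simp only [repairBound, Nat.cast_add, Nat.cast_sum, mul_add, sum_add_distrib,
    sum_bernoulliWeight_mul_card, outside, everywhere]
  ring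

end Repair

section ParamDomNum

variable {V : Type*} [Fintype V] [DecidableEq V] (G : SimpleGraph V) [DecidableRel G.Adj]

lemma paramDomNum_le_card {k l : ℕ} {D : Finset V}
    (hk : ∀ v ∉ D, k ≤ #(G.neighborFinset v ∩ D))
    (hl : ∀ v ∈ D, l - 1 ≤ #(G.neighborFinset v ∩ D)) :
    paramDomNum G k l ≤ #D := by
  refine Nat.sInf_le ⟨D, fun v hv => ?_, fun v hv => ?_, rfl⟩
  · rw [insert_inter_of_notMem hv]
    exact hk v hv
  · rw [insert_inter_of_mem hv, card_insert_of_notMem (by simp)]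
    exact Nat.le_add_of_sub_le (hl v hv)

lemma paramDomNum_le_add_choose_mul_pow {δ k l : ℕ} (hδ : δ ≤ G.minDegree)
    (hδkl : max k (l - 1) ≤ δ) {p : ℝ} (hp₀ : 0 ≤ p) (hp₁ : p ≤ 1) :
    (paramDomNum G k l : ℝ) ≤
      (p + δ.choose (δ - k + 1) * (1 - p) ^ (δ - k + 1 + 1) +
        δ.choose (δ - (l - 1) + 1) * (1 - p) ^ (δ - (l - 1) + 1)) * Fintype.card V := by
  obtain ⟨hkδ, hlδ⟩ := max_le_iff.1 hδkl
  have exists_neighbors (v : V) : ∃ S ⊆ G.neighborFinset v, #S = δ :=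
    exists_subset_card_eq (hδ.trans (G.minDegree_le_degree v))
  choose N hNG hN using exists_neighbors
  have notMem_N (v : V) : v ∉ N v := fun hv => G.notMem_neighborFinset_self v (hNG v hv)
  have card_inter_le (v : V) (D : Finset V) : #(N v ∩ D) ≤ #(G.neighborFinset v ∩ D) :=
    card_le_card (inter_subset_inter_right (hNG v))
  obtain ⟨A, hA⟩ := exists_le_sum_bernoulliWeight_mul hp₀ hp₁
    fun A => (repairBound N (δ - k + 1) (δ - (l - 1) + 1) A : ℝ)
  obtain ⟨D, hDk, hDl, hD⟩ := exists_card_le_repairBound hN hkδ hlδ A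
  rw [← sum_bernoulliWeight_mul_repairBound p hN notMem_N]
  refine le_trans (Nat.cast_le.2 (le_trans ?_ hD)) hA
  exact paramDomNum_le_card G (fun v hv => (hDk v hv).trans (card_inter_le v D))
    fun v hv => (hDl v hv).trans (card_inter_le v D)

lemma paramDomNum_le_add_choose_add_choose_mul_pow {δ k l : ℕ} (hδ : δ ≤ G.minDegree) (hk : 1 ≤ k)
    (hδkl : max k (l - 1) ≤ δ) {p : ℝ} (hp₀ : 0 ≤ p) (hp₁ : p ≤ 1) :
    (paramDomNum G k l : ℝ) ≤
      (p + (δ.choose (δ - k + 1) + δ.choose (δ - (l - 1) + 1)) *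
        (1 - p) ^ (δ + 2 - max k l)) * Fintype.card V := by
  refine (paramDomNum_le_add_choose_mul_pow G hδ hδkl hp₀ hp₁).trans ?_
  rw [add_mul (δ.choose (δ - k + 1) : ℝ), ← add_assoc]
  have pow_anti {i j : ℕ} (hij : i ≤ j) : (1 - p) ^ j ≤ (1 - p) ^ i :=
    pow_le_pow_of_le_one (sub_nonneg.2 hp₁) (sub_le_self 1 hp₀) hij
  gcongr ?_ * _
  gcongr _ + _ * ?_ + _ * ?_
  all_goals
    apply pow_anti
    omega

end ParamDomNum

lemma choose_sub_add_one {δ k : ℕ} (hk : 1 ≤ k) (hkδ : k ≤ δ) :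
    δ.choose (δ - k + 1) = δ.choose (k - 1) :=
  Nat.choose_symm_of_eq_add (by omega)

lemma choose_sub_pred_add_one {δ l : ℕ} (hlδ : l - 1 ≤ δ) :
    δ.choose (δ - (l - 1) + 1) = if 2 ≤ l then δ.choose (l - 2) else 0 := by
  split_ifs with hl
  · exact choose_sub_add_one (Nat.le_sub_of_add_le hl) hlδ
  · exact Nat.choose_eq_zero_of_lt (by omega)

lemma exists_add_mul_one_sub_pow_le_log_div {b : ℝ} {d : ℕ} (h : 1 ≤ d * b) :
    ∃ p, 0 ≤ p ∧ p ≤ 1 ∧ p + b * (1 - p) ^ d ≤ (log (d * b) + 1) / d := by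
  have hd : d ≠ 0 := by
    rintro rfl
    norm_num at h
  have hd₀ : (0 : ℝ) < d := by positivity
  have hb₀ : 0 < b := pos_of_mul_pos_right (one_pos.trans_le h) hd₀.le
  obtain hle | hlt := le_or_gt (log (d * b)) d
  · refine ⟨log (d * b) / d, div_nonneg (log_nonneg h) hd₀.le, (div_le_one hd₀).2 hle, ?_⟩
    calc log (d * b) / d + b * (1 - log (d * b) / d) ^ d
        ≤ log (d * b) / d + b * exp (-log (d * b)) := by
          gcongr
          exact one_sub_div_pow_le_exp_neg hle
      _ = (log (d * b) + 1) / d := by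
          rw [exp_neg, exp_log (mul_pos hd₀ hb₀)]
          field_simp
  · refine ⟨1, zero_le_one, le_rfl, ?_⟩
    rw [sub_self, zero_pow hd, mul_zero, add_zero, one_le_div hd₀]
    linarith

theorem param_domination_log_bound_two_general
    {V : Type*} [Fintype V] [DecidableEq V]
    (G : SimpleGraph V) [DecidableRel G.Adj]
    (n : ℕ) (hn : n = Fintype.card V)
    (δ : ℕ) (hδ : δ ≤ G.minDegree)
    (k l : ℕ) (hk : 1 ≤ k)
    (hδkl : max k (l - 1) ≤ δ)
    (dh : ℝ) (hdh : dh = (δ : ℝ) - max k l + 1)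
    (b : ℝ) (hb : b = (δ.choose (k - 1) : ℕ) + if 2 ≤ l then (δ.choose (l - 2) : ℕ) else 0) :
    (paramDomNum G k l : ℝ) ≤
      ((Real.log (dh + 1) + Real.log b + 1) / (dh + 1)) * n := by
  have hd₁ : 1 ≤ δ + 2 - max k l := by omega
  have hdh_eq : dh + 1 = (δ + 2 - max k l : ℕ) := by
    rw [hdh, Nat.cast_sub (by omega)]
    push_cast
    ring
  have hb_eq : b = δ.choose (δ - k + 1) + δ.choose (δ - (l - 1) + 1) := by
    rw [hb, choose_sub_add_one hk (le_of_max_le_left hδkl),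
      choose_sub_pred_add_one (le_of_max_le_right hδkl)]
  have hb₁ : 1 ≤ b := by
    rw [hb]
    exact_mod_cast le_add_right (Nat.choose_pos (by omega : k - 1 ≤ δ))
  obtain ⟨p, hp₀, hp₁, hp⟩ := exists_add_mul_one_sub_pow_le_log_div
    (one_le_mul_of_one_le_of_one_le (Nat.one_le_cast.2 hd₁) hb₁)
  rw [hn, hdh_eq, ← log_mul (by positivity) (by positivity)]
  refine (paramDomNum_le_add_choose_add_choose_mul_pow G hδ hk hδkl hp₀ hp₁).trans ?_
  rw [← hb_eq]
  gcongr

theorem param_domination_log_bound_two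
    {V : Type*} [Fintype V] [DecidableEq V]
    (G : SimpleGraph V) [DecidableRel G.Adj]
    (n : ℕ) (hn : n = Fintype.card V)
    (δ : ℕ) (hδ : δ = G.minDegree)
    (k l : ℕ) (hk : 1 ≤ k) (hl : 1 ≤ l)
    (hδkl : max k (l - 1) ≤ δ)
    (dh : ℝ) (hdh : dh = (δ : ℝ) - max k l + 1)
    (b : ℝ) (hb : b = (δ.choose (k - 1) : ℕ) + if 2 ≤ l then (δ.choose (l - 2) : ℕ) else 0) :
    (paramDomNum G k l : ℝ) ≤
      ((Real.log (dh + 1) + Real.log b + 1) / (dh + 1)) * n := by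
  exact param_domination_log_bound_two_general G n hn δ hδ.le k l hk hδkl dh hdh b hb
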